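/- arXiv:2602.05647 — 2 statements merged into one kernel-verified Lean document; each statement's English description precedes it below -/
import Mathlib

section
/- Let σ₁,…,σₙ and τ₁,…,τ_p be positive integers, with dilations δ_λ on ℝⁿ and E_λ on ℝᵖ, let 𝓔 = Σ_{l=1}^p τ_l, and let F_λ(x,y,ξ) = (δ_λ(x), δ_λ(y), E_λ(ξ)). Let 𝒱 = {(x,y,ξ) ∈ ℝⁿ×ℝⁿ×ℝᵖ : (x,ξ) ≠ (y,0)} and let g : 𝒱 → ℝ be smooth (C^∞ on the open set 𝒱) and F_λ-homogeneous of degree d ∈ ℝ with d + 𝓔 < 0, i.e. g(F_λ(x,y,ξ)) = λ^d g(x,y,ξ) for all λ > 0 and (x,y,ξ) ∈ 𝒱. Then: (i) for every pair (x,y) ∈ ℝⁿ×ℝⁿ with x ≠ y, the function ξ ↦ g(x,y,ξ) is Lebesgue integrable on ℝᵖ; (ii) the function Φ_g(x,y) = ∫_{ℝᵖ} g(x,y,ξ) dξ is continuous on the open set {(x,y) ∈ ℝⁿ×ℝⁿ : x ≠ y}. -/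
open MeasureTheory

/-!
Let `ρ` be the homogeneous norm of the dilations `E_t`, and rescale a point `(q, ξ)` by
`t = (1 + ρ ξ)⁻¹ ∈ (0, 1]`. The rescaled fibre variable `η = E_t ξ` satisfies `ρ η + t = 1`, so
as `q` runs over a compact set `K` of admissible parameters, `(t, q, η)` stays in a compact set.
On that set `η = 0` forces `t = 1`, and then the rescaled parameter is `q` itself; hence
`(t, q, η) ↦ g (D_t q, η)` is continuous there, and bounded. By homogeneity
`‖g (q, ξ)‖ ≤ C * (1 + ρ ξ) ^ d` uniformly in `q ∈ K`. The right-hand side is integrable as soon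
as `d + ∑ τ < 0`, and dominated convergence concludes.
-/

open Set Topology

variable {ι Q E : Type*}

/-- The anisotropic dilation `E_t` with weights `τ`. The powers are real powers, so it is meant
for `0 ≤ t`. -/
noncomputable def anisotropicDilation (τ : ι → ℝ) (t : ℝ) (ξ : ι → ℝ) : ι → ℝ :=
  fun l => t ^ τ l * ξ l

/-- The homogeneous norm `ρ_E` of the anisotropic dilations with weights `τ`. -/
noncomputable def homogeneousNorm [Fintype ι] (τ ξ : ι → ℝ) : ℝ := ∑ l, |ξ l| ^ (τ l)⁻¹

/-- `g` is homogeneous of degree `d` on `V` under the dilations `F`. Only the contractions `F t`,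
`0 < t ≤ 1`, are tested; `V` is not assumed invariant. -/
def IsHomogeneousOn [SMul ℝ E] (F : ℝ → Q → Q) (d : ℝ) (g : Q → E) (V : Set Q) : Prop :=
  ∀ t ∈ Ioc (0 : ℝ) 1, ∀ z ∈ V, g (F t z) = t ^ d • g z

section HomogeneousNorm

variable [Fintype ι] {τ : ι → ℝ}

lemma homogeneousNorm_nonneg (τ ξ : ι → ℝ) : 0 ≤ homogeneousNorm τ ξ :=
  Finset.sum_nonneg fun _ _ => by positivity

lemma homogeneousNorm_zero (hτ : ∀ l, 0 < τ l) : homogeneousNorm τ 0 = 0 :=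
  Finset.sum_eq_zero fun l _ => by simp [Real.zero_rpow, (hτ l).ne']

lemma continuous_homogeneousNorm (hτ : ∀ l, 0 < τ l) : Continuous (homogeneousNorm τ) :=
  continuous_finsetSum _ fun l _ =>
    (Real.continuous_rpow_const (inv_nonneg.2 (hτ l).le)).comp (continuous_apply l).abs

lemma homogeneousNorm_anisotropicDilation (hτ : ∀ l, 0 < τ l) {t : ℝ} (ht : 0 ≤ t) (ξ : ι → ℝ) :
    homogeneousNorm τ (anisotropicDilation τ t ξ) = t * homogeneousNorm τ ξ := by
  simp only [homogeneousNorm, anisotropicDilation, Finset.mul_sum]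
  refine Finset.sum_congr rfl fun l _ => ?_
  rw [abs_mul, abs_of_nonneg (by positivity), Real.mul_rpow (by positivity) (abs_nonneg _),
    Real.rpow_rpow_inv ht (hτ l).ne']

lemma abs_le_homogeneousNorm_rpow (hτ : ∀ l, 0 < τ l) (ξ : ι → ℝ) (l : ι) :
    |ξ l| ≤ homogeneousNorm τ ξ ^ τ l := by
  rw [← Real.rpow_inv_le_iff_of_pos (abs_nonneg _) (homogeneousNorm_nonneg τ ξ) (hτ l)]
  exact Finset.single_le_sum (f := fun l => |ξ l| ^ (τ l)⁻¹) (fun _ _ => by positivity)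
    (Finset.mem_univ l)

lemma norm_le_one_of_homogeneousNorm_le_one (hτ : ∀ l, 0 < τ l) {ξ : ι → ℝ}
    (hξ : homogeneousNorm τ ξ ≤ 1) : ‖ξ‖ ≤ 1 :=
  (pi_norm_le_iff_of_nonneg zero_le_one).2 fun l =>
    (abs_le_homogeneousNorm_rpow hτ ξ l).trans
      (Real.rpow_le_one (homogeneousNorm_nonneg τ ξ) hξ (hτ l).le)

lemma one_add_abs_le_two_mul_rpow (hτ : ∀ l, 0 < τ l) (ξ : ι → ℝ) (l : ι) :
    1 + |ξ l| ≤ 2 * (1 + homogeneousNorm τ ξ) ^ τ l := by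
  have hρ := homogeneousNorm_nonneg τ ξ
  have one_le : 1 ≤ (1 + homogeneousNorm τ ξ) ^ τ l :=
    Real.one_le_rpow (by linarith) (hτ l).le
  have abs_le : |ξ l| ≤ (1 + homogeneousNorm τ ξ) ^ τ l :=
    (abs_le_homogeneousNorm_rpow hτ ξ l).trans
      (Real.rpow_le_rpow hρ (by linarith) (hτ l).le)
  linarith

lemma one_add_homogeneousNorm_rpow_le_prod (hτ : ∀ l, 0 < τ l) {a : ℝ} (ha : 0 ≤ a)
    (ξ : ι → ℝ) :
    (1 + homogeneousNorm τ ξ) ^ (-(a * ∑ l, τ l)) ≤ ∏ l, 2 ^ a * (1 + ‖ξ l‖) ^ (-a) := by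
  have hρ : 0 < 1 + homogeneousNorm τ ξ := by linarith [homogeneousNorm_nonneg τ ξ]
  rw [Finset.mul_sum, ← Finset.sum_neg_distrib, Real.rpow_sum_of_pos hρ]
  refine Finset.prod_le_prod (fun l _ => by positivity) fun l _ => ?_
  calc (1 + homogeneousNorm τ ξ) ^ (-(a * τ l))
      = 2 ^ a * (2 * (1 + homogeneousNorm τ ξ) ^ τ l) ^ (-a) := by
        rw [Real.mul_rpow (by positivity) (by positivity), ← Real.rpow_mul hρ.le, ← mul_assoc,
          ← Real.rpow_add two_pos, add_neg_cancel, Real.rpow_zero, one_mul]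
        ring_nf
    _ ≤ 2 ^ a * (1 + ‖ξ l‖) ^ (-a) := by
        gcongr 2 ^ a * ?_
        exact Real.rpow_le_rpow_of_nonpos (by positivity) (one_add_abs_le_two_mul_rpow hτ ξ l)
          (neg_nonpos.2 ha)

theorem integrable_one_add_homogeneousNorm_rpow (hτ : ∀ l, 0 < τ l) {d : ℝ}
    (hd : d + ∑ l, τ l < 0) :
    Integrable fun ξ : ι → ℝ => (1 + homogeneousNorm τ ξ) ^ d := by
  have eventually_lt : ∀ᶠ a in 𝓝[>] (1 : ℝ), a * ∑ l, τ l < -d :=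
    nhdsWithin_le_nhds
      (((continuous_mul_const _).tendsto 1).eventually_lt_const (by linarith))
  obtain ⟨a, had, (ha : 1 < a)⟩ := (eventually_lt.and self_mem_nhdsWithin).exists
  have integrable_prod :
      Integrable fun ξ : ι → ℝ => ∏ l, (2 : ℝ) ^ a * (1 + ‖ξ l‖) ^ (-a) :=
    Integrable.fintype_prod (f := fun _ (s : ℝ) => 2 ^ a * (1 + ‖s‖) ^ (-a)) fun _ =>
      (integrable_one_add_norm (by simpa using ha)).const_mul _
  have one_le (ξ : ι → ℝ) : 1 ≤ 1 + homogeneousNorm τ ξ :=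
    le_add_of_nonneg_right (homogeneousNorm_nonneg τ ξ)
  have continuous_rpow : Continuous fun ξ : ι → ℝ => (1 + homogeneousNorm τ ξ) ^ d :=
    (continuous_const.add (continuous_homogeneousNorm hτ)).rpow_const fun ξ =>
      Or.inl (zero_lt_one.trans_le (one_le ξ)).ne'
  refine integrable_prod.mono' continuous_rpow.aestronglyMeasurable (.of_forall fun ξ => ?_)
  rw [Real.norm_of_nonneg (Real.rpow_nonneg (zero_le_one.trans (one_le ξ)) d)]
  exact (Real.rpow_le_rpow_of_exponent_le (one_le ξ) (by linarith)).trans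
    (one_add_homogeneousNorm_rpow_le_prod hτ (zero_le_one.trans ha.le) ξ)

end HomogeneousNorm

section FibreIntegral

variable [TopologicalSpace Q] [NormedAddCommGroup E] {τ : ι → ℝ} {D : ℝ → Q → Q} {U : Set Q}
  {g : Q × (ι → ℝ) → E} {d : ℝ}

lemma continuous_fibre (hg : ContinuousOn g {z | z.1 ∈ U ∨ z.2 ≠ 0}) {q : Q} (hq : q ∈ U) :
    Continuous fun ξ => g (q, ξ) :=
  hg.comp_continuous (by fun_prop) fun _ => Or.inl hq

variable [Fintype ι]

lemma exists_norm_comp_dilation_le (hτ : ∀ l, 0 < τ l) (hD : Continuous (Function.uncurry D))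
    (hD_one : ∀ q, D 1 q = q) (hg : ContinuousOn g {z | z.1 ∈ U ∨ z.2 ≠ 0})
    {K : Set Q} (hK : IsCompact K) (hKU : K ⊆ U) :
    ∃ C, ∀ t ∈ Icc (0 : ℝ) 1, ∀ q ∈ K, ∀ η, homogeneousNorm τ η + t = 1 →
      ‖g (D t q, η)‖ ≤ C := by
  let A : Set (ℝ × Q × (ι → ℝ)) :=
    (Icc 0 1 ×ˢ K ×ˢ Metric.closedBall 0 1) ∩ {w | homogeneousNorm τ w.2.2 + w.1 = 1}
  have compact_A : IsCompact A :=
    (isCompact_Icc.prod (hK.prod (isCompact_closedBall _ _))).inter_right <| isClosed_eq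
      (((continuous_homogeneousNorm hτ).comp (by fun_prop)).add continuous_fst) continuous_const
  have mapsTo : MapsTo (fun w => (D w.1 w.2.1, w.2.2)) A {z | z.1 ∈ U ∨ z.2 ≠ 0} := by
    rintro ⟨t, q, η⟩ ⟨⟨-, hq, -⟩, hηt⟩
    refine or_iff_not_imp_right.2 fun hη => ?_
    obtain rfl : η = 0 := not_not.1 hη
    obtain rfl : t = 1 := by simpa [homogeneousNorm_zero hτ] using hηt
    simpa [hD_one] using hKU hq
  have continuous_rescale :
      Continuous fun w : ℝ × Q × (ι → ℝ) => (D w.1 w.2.1, w.2.2) :=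
    (hD.comp (continuous_fst.prodMk continuous_snd.fst)).prodMk continuous_snd.snd
  obtain ⟨C, hC⟩ := compact_A.exists_bound_of_continuousOn
    (hg.comp continuous_rescale.continuousOn mapsTo)
  refine ⟨C, fun t ht q hq η hηt => hC (t, q, η) ⟨⟨ht, hq, ?_⟩, hηt⟩⟩
  exact mem_closedBall_zero_iff.2 (norm_le_one_of_homogeneousNorm_le_one hτ (by linarith [ht.1]))

variable [NormedSpace ℝ E]

theorem IsHomogeneousOn.exists_norm_le_one_add_homogeneousNorm_rpow (hτ : ∀ l, 0 < τ l)
    (hD : Continuous (Function.uncurry D)) (hD_one : ∀ q, D 1 q = q)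
    (hg : ContinuousOn g {z | z.1 ∈ U ∨ z.2 ≠ 0})
    (hom : IsHomogeneousOn (fun t z => (D t z.1, anisotropicDilation τ t z.2)) d g
      {z | z.1 ∈ U ∨ z.2 ≠ 0})
    {K : Set Q} (hK : IsCompact K) (hKU : K ⊆ U) :
    ∃ C, ∀ q ∈ K, ∀ ξ, ‖g (q, ξ)‖ ≤ C * (1 + homogeneousNorm τ ξ) ^ d := by
  obtain ⟨C, hC⟩ := exists_norm_comp_dilation_le hτ hD hD_one hg hK hKU
  refine ⟨C, fun q hq ξ => ?_⟩
  have hρ := homogeneousNorm_nonneg τ ξ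
  set s := 1 + homogeneousNorm τ ξ
  have s_pos : 0 < s := by linarith
  have inv_mem : s⁻¹ ∈ Ioc (0 : ℝ) 1 := ⟨inv_pos.2 s_pos, inv_le_one_of_one_le₀ (by linarith)⟩
  have rescaled_eq : homogeneousNorm τ (anisotropicDilation τ s⁻¹ ξ) + s⁻¹ = 1 := by
    rw [homogeneousNorm_anisotropicDilation hτ inv_mem.1.le]
    field_simp
    linarith
  have rescaled_le := hC s⁻¹ (Ioc_subset_Icc_self inv_mem) q hq _ rescaled_eq
  rwa [hom s⁻¹ inv_mem (q, ξ) (Or.inl (hKU hq)), norm_smul, Real.inv_rpow s_pos.le, norm_inv,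
    Real.norm_of_nonneg (by positivity), inv_mul_le_iff₀ (by positivity), mul_comm] at rescaled_le

theorem IsHomogeneousOn.integrable_fibre (hτ : ∀ l, 0 < τ l)
    (hD : Continuous (Function.uncurry D)) (hD_one : ∀ q, D 1 q = q)
    (hg : ContinuousOn g {z | z.1 ∈ U ∨ z.2 ≠ 0})
    (hom : IsHomogeneousOn (fun t z => (D t z.1, anisotropicDilation τ t z.2)) d g
      {z | z.1 ∈ U ∨ z.2 ≠ 0})
    (hd : d + ∑ l, τ l < 0) {q : Q} (hq : q ∈ U) :
    Integrable fun ξ => g (q, ξ) := by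
  obtain ⟨C, hC⟩ := hom.exists_norm_le_one_add_homogeneousNorm_rpow hτ hD hD_one hg
    isCompact_singleton (singleton_subset_iff.2 hq)
  exact ((integrable_one_add_homogeneousNorm_rpow hτ hd).const_mul C).mono'
    (continuous_fibre hg hq).aestronglyMeasurable (.of_forall (hC q rfl))

theorem IsHomogeneousOn.continuousOn_integral_fibre [LocallyCompactSpace Q]
    [FirstCountableTopology Q] (hτ : ∀ l, 0 < τ l)
    (hD : Continuous (Function.uncurry D)) (hD_one : ∀ q, D 1 q = q) (hU : IsOpen U)
    (hg : ContinuousOn g {z | z.1 ∈ U ∨ z.2 ≠ 0})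
    (hom : IsHomogeneousOn (fun t z => (D t z.1, anisotropicDilation τ t z.2)) d g
      {z | z.1 ∈ U ∨ z.2 ≠ 0})
    (hd : d + ∑ l, τ l < 0) :
    ContinuousOn (fun q => ∫ ξ, g (q, ξ)) U := by
  intro q₀ hq₀
  obtain ⟨K, hK, hq₀K, hKU⟩ := exists_compact_subset hU hq₀
  obtain ⟨C, hC⟩ := hom.exists_norm_le_one_add_homogeneousNorm_rpow hτ hD hD_one hg hK hKU
  have continuousOn_param (ξ : ι → ℝ) : ContinuousOn (fun q => g (q, ξ)) U :=
    hg.comp (by fun_prop) fun _ => Or.inl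
  refine (continuousAt_of_dominated ?_ ?_
    ((integrable_one_add_homogeneousNorm_rpow hτ hd).const_mul C) ?_).continuousWithinAt
  · filter_upwards [hU.mem_nhds hq₀] with q hq
    exact (continuous_fibre hg hq).aestronglyMeasurable
  · filter_upwards [mem_interior_iff_mem_nhds.1 hq₀K] with q hq
    exact .of_forall (hC q hq)
  · exact .of_forall fun ξ => (continuousOn_param ξ).continuousAt (hU.mem_nhds hq₀)

end FibreIntegral

theorem stmt_4_general {X : Type*} [TopologicalSpace X] [T2Space X] [LocallyCompactSpace X]
    [FirstCountableTopology X] [Fintype ι] [NormedAddCommGroup E] [NormedSpace ℝ E]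
    {D : ℝ → X → X} (hD : Continuous (Function.uncurry D)) (hD_one : ∀ x, D 1 x = x)
    {τ : ι → ℝ} (hτ : ∀ l, 0 < τ l) {g : X × X × (ι → ℝ) → E}
    (hg : ContinuousOn g {z | (z.1, z.2.2) ≠ (z.2.1, 0)}) {d : ℝ} (hd : d + ∑ l, τ l < 0)
    (hom : IsHomogeneousOn (fun t z => (D t z.1, D t z.2.1, anisotropicDilation τ t z.2.2)) d g
      {z | (z.1, z.2.2) ≠ (z.2.1, 0)}) :
    (∀ x y : X, x ≠ y → Integrable (fun ξ => g (x, y, ξ)) volume) ∧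
    ContinuousOn (fun q : X × X => ∫ ξ, g (q.1, q.2, ξ)) {q : X × X | q.1 ≠ q.2} := by
  let D₂ : ℝ → X × X → X × X := fun t q => (D t q.1, D t q.2)
  let U : Set (X × X) := {q | q.1 ≠ q.2}
  let g₂ : (X × X) × (ι → ℝ) → E := fun z => g (z.1.1, z.1.2, z.2)
  have hD₂ : Continuous (Function.uncurry D₂) :=
    (hD.comp (continuous_fst.prodMk continuous_snd.fst)).prodMk
      (hD.comp (continuous_fst.prodMk continuous_snd.snd))
  have hD₂_one (q : X × X) : D₂ 1 q = q := by simp only [D₂, hD_one]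
  have hU : IsOpen U := isOpen_ne_fun continuous_fst continuous_snd
  have mem_domain (z : (X × X) × (ι → ℝ)) (hz : z.1 ∈ U ∨ z.2 ≠ 0) :
      (z.1.1, z.2) ≠ (z.1.2, 0) := by
    rwa [ne_eq, Prod.mk.injEq, not_and_or]
  have hg₂ : ContinuousOn g₂ {z | z.1 ∈ U ∨ z.2 ≠ 0} := hg.comp (by fun_prop) mem_domain
  have hom₂ : IsHomogeneousOn (fun t z => (D₂ t z.1, anisotropicDilation τ t z.2)) d g₂
      {z | z.1 ∈ U ∨ z.2 ≠ 0} :=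
    fun t ht z hz => hom t ht (z.1.1, z.1.2, z.2) (mem_domain z hz)
  exact ⟨fun x y hxy => hom₂.integrable_fibre hτ hD₂ hD₂_one hg₂ hd (q := (x, y)) hxy,
    hom₂.continuousOn_integral_fibre hτ hD₂ hD₂_one hU hg₂ hd⟩

/-- Let `g` be `C^∞` on `𝒱 = {(x,y,ξ) : (x,ξ) ≠ (y,0)} ⊆ ℝⁿ×ℝⁿ×ℝᵖ` and
`F_λ`-homogeneous of degree `d` with `d + 𝓔 < 0`, where `F_λ(x,y,ξ) = (δ_λ(x), δ_λ(y), E_λ(ξ))`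
and `𝓔 = Σ_l τ_l`. Then (i) for every `x ≠ y` the function `ξ ↦ g(x,y,ξ)` is integrable on
`ℝᵖ`; (ii) `Φ_g(x,y) = ∫_{ℝᵖ} g(x,y,ξ) dξ` is continuous on `{x ≠ y}`. -/
theorem stmt_4 (n p : ℕ) (σ : Fin n → ℕ) (τ : Fin p → ℕ)
    (hσ : ∀ i, 0 < σ i) (hτ : ∀ l, 0 < τ l)
    (𝓔 : ℕ) (h𝓔 : 𝓔 = ∑ l, τ l)
    (V : Set ((Fin n → ℝ) × (Fin n → ℝ) × (Fin p → ℝ)))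
    (hV : V = {z | (z.1, z.2.2) ≠ (z.2.1, 0)})
    (g : (Fin n → ℝ) × (Fin n → ℝ) × (Fin p → ℝ) → ℝ)
    (hg : ContDiffOn ℝ (⊤ : ℕ∞) g V)
    (d : ℝ) (hd : d + (𝓔 : ℝ) < 0)
    (hom : ∀ lam : ℝ, 0 < lam → ∀ z ∈ V,
      g (fun i => lam ^ (σ i) * z.1 i, fun i => lam ^ (σ i) * z.2.1 i,
         fun l => lam ^ (τ l) * z.2.2 l) = lam ^ d * g z) :
    (∀ x y : Fin n → ℝ, x ≠ y → Integrable (fun ξ => g (x, y, ξ)) volume) ∧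
    ContinuousOn (fun q : (Fin n → ℝ) × (Fin n → ℝ) => ∫ ξ, g (q.1, q.2, ξ))
      {q : (Fin n → ℝ) × (Fin n → ℝ) | q.1 ≠ q.2} := by
  subst h𝓔 hV
  refine stmt_4_general (D := fun t x i => t ^ σ i * x i) (τ := fun l => (τ l : ℝ))
    (by unfold Function.uncurry; fun_prop) (by simp) (by simpa using hτ) hg.continuousOn
    (by exact_mod_cast hd) fun t ht z hz => ?_
  unfold anisotropicDilation
  simpa only [Real.rpow_natCast, smul_eq_mul] using hom t ht.1 z hz
end

section
/- Let σ₁,…,σₙ be positive integers with anisotropic dilations δ_λ on ℝⁿ, let X be a smooth vector field on ℝⁿ with coefficients p₁,…,pₙ, and let ν be a positive integer. Suppose X is δ_λ-homogeneous of degree ν, i.e. for every smooth u : ℝⁿ → ℝ, every λ > 0 and every x ∈ ℝⁿ: X(u ∘ δ_λ)(x) = λ^ν (Xu)(δ_λ(x)). Then for every j = 1,…,n, p_j(δ_λ(x)) = λ^{σ_j − ν} p_j(x) for all λ > 0 and x ∈ ℝⁿ; consequently each p_j is a polynomial function, and p_j ≡ 0 whenever ν > σ_j. -/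
/-!
Comparing the two sides of the homogeneity identity on the coordinate functions gives
`p_j ∘ δ_λ = λ ^ (σ_j - ν) p_j`. A function that is homogeneous of degree `m` and continuous at the
origin vanishes if `m < 0` and is constant if `m = 0`: let `λ → 0⁺`. If `m > 0`, Euler's identity
`m f = ∑ σ_i x_i ∂_i f` recovers `f` from its partial derivatives, which are homogeneous of the
smaller degrees `m - σ_i`, so that after finitely many differentiations `f` is seen to be a
polynomial.
-/

open Filter Topology

section Dilation

variable {ι : Type*}

/-- The anisotropic dilation `δ_λ` of `ℝ^ι` with weights `σ`, as a continuous linear map. The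
weights are real, so that `lam ^ σ i` is `Real.rpow`, which is meaningful for `0 < lam`. -/
noncomputable def dilation (σ : ι → ℝ) (lam : ℝ) : (ι → ℝ) →L[ℝ] (ι → ℝ) :=
  ContinuousLinearMap.pi fun i => lam ^ σ i • ContinuousLinearMap.proj i

theorem dilation_apply (σ : ι → ℝ) (lam : ℝ) (x : ι → ℝ) (i : ι) :
    dilation σ lam x i = lam ^ σ i * x i :=
  rfl

theorem dilation_one (σ : ι → ℝ) (x : ι → ℝ) : dilation σ 1 x = x := by
  ext i
  simp [dilation_apply]

theorem dilation_natCast (σ : ι → ℕ) (lam : ℝ) (x : ι → ℝ) :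
    dilation (fun i => (σ i : ℝ)) lam x = fun i => lam ^ σ i * x i := by
  ext i
  rw [dilation_apply, Real.rpow_natCast]

theorem dilation_single [DecidableEq ι] (σ : ι → ℝ) (lam : ℝ) (i : ι) (c : ℝ) :
    dilation σ lam (Pi.single i c) = lam ^ σ i • Pi.single i c := by
  ext j
  obtain rfl | hji := eq_or_ne j i
  · rfl
  · simp [dilation_apply, hji]

theorem tendsto_dilation_zero {σ : ι → ℝ} (hσ : ∀ i, 0 < σ i) (x : ι → ℝ) :
    Tendsto (fun lam => dilation σ lam x) (𝓝 0) (𝓝 0) := by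
  refine tendsto_pi_nhds.2 fun i => ?_
  have hpow : Tendsto (fun lam : ℝ => lam ^ σ i) (𝓝 0) (𝓝 (0 ^ σ i)) :=
    Real.continuousAt_rpow_const 0 (σ i) (Or.inr (hσ i).le)
  simpa only [dilation_apply, Real.zero_rpow (hσ i).ne', zero_mul, Pi.zero_apply] using
    hpow.mul_const (x i)

theorem hasDerivAt_dilation_one [Finite ι] (σ : ι → ℝ) (x : ι → ℝ) :
    HasDerivAt (fun lam => dilation σ lam x) (fun i => σ i * x i) 1 := by
  have := Fintype.ofFinite ι
  refine hasDerivAt_pi.2 fun i => ?_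
  simpa [dilation_apply] using
    (Real.hasDerivAt_rpow_const (p := σ i) (Or.inl one_ne_zero)).mul_const (x i)

end Dilation

/-- `f` is homogeneous of degree `m` under the anisotropic dilations with weights `σ`:
`f ∘ δ_λ = λ ^ m f` for all `λ > 0`. -/
def IsDilationHomogeneous {ι E : Type*} [SMul ℝ E] (σ : ι → ℝ) (m : ℝ) (f : (ι → ℝ) → E) : Prop :=
  ∀ ⦃lam : ℝ⦄, 0 < lam → ∀ x, f (dilation σ lam x) = lam ^ m • f x

namespace IsDilationHomogeneous

section Limit

variable {ι E : Type*} [AddCommGroup E] [Module ℝ E] [TopologicalSpace E] [T2Space E]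
  {σ : ι → ℝ} {m : ℝ} {f : (ι → ℝ) → E}

theorem apply_eq_apply_zero (h : IsDilationHomogeneous σ 0 f) (hσ : ∀ i, 0 < σ i)
    (hf : ContinuousAt f 0) (x : ι → ℝ) : f x = f 0 := by
  have hlim : Tendsto (fun lam => f (dilation σ lam x)) (𝓝[>] 0) (𝓝 (f 0)) :=
    hf.tendsto.comp ((tendsto_dilation_zero hσ x).mono_left nhdsWithin_le_nhds)
  refine tendsto_nhds_unique (tendsto_const_nhds.congr' ?_) hlim
  filter_upwards [self_mem_nhdsWithin] with lam hlam
  rw [h hlam, Real.rpow_zero, one_smul]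

theorem apply_eq_zero_of_neg [ContinuousSMul ℝ E] (h : IsDilationHomogeneous σ m f)
    (hσ : ∀ i, 0 < σ i) (hm : m < 0) (hf : ContinuousAt f 0) (x : ι → ℝ) : f x = 0 := by
  -- `f x = λ ^ (-m) f (δ_λ x)`, and the right-hand side tends to `0 • f 0` as `λ → 0⁺`.
  have hpow : Tendsto (fun lam : ℝ => lam ^ (-m)) (𝓝 0) (𝓝 (0 ^ (-m))) :=
    Real.continuousAt_rpow_const 0 (-m) (Or.inr (neg_pos.2 hm).le)
  rw [Real.zero_rpow (neg_pos.2 hm).ne'] at hpow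
  have hlim : Tendsto (fun lam => lam ^ (-m) • f (dilation σ lam x)) (𝓝[>] 0) (𝓝 0) := by
    simpa only [zero_smul, Function.comp_def] using
      (hpow.smul (hf.tendsto.comp (tendsto_dilation_zero hσ x))).mono_left nhdsWithin_le_nhds
  refine tendsto_nhds_unique (tendsto_const_nhds.congr' ?_) hlim
  filter_upwards [self_mem_nhdsWithin] with lam hlam
  rw [h hlam, smul_smul, ← Real.rpow_add hlam, neg_add_cancel, Real.rpow_zero, one_smul]

end Limit

section Derivative

variable {ι E : Type*} [NormedAddCommGroup E] [NormedSpace ℝ E]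
  {σ : ι → ℝ} {m : ℝ} {f : (ι → ℝ) → E}

theorem fderiv_single [Finite ι] [DecidableEq ι] (h : IsDilationHomogeneous σ m f)
    (hf : Differentiable ℝ f) (i : ι) :
    IsDilationHomogeneous σ (m - σ i) fun x => fderiv ℝ f x (Pi.single i 1) := by
  have := Fintype.ofFinite ι
  intro lam hlam x
  have chain : lam ^ m • fderiv ℝ f x = (fderiv ℝ f (dilation σ lam x)).comp (dilation σ lam) := by
    have hcomp := (hf (dilation σ lam x)).hasFDerivAt.comp x (dilation σ lam).hasFDerivAt
    rw [show f ∘ dilation σ lam = fun y => lam ^ m • f y from funext (h hlam)] at hcomp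
    exact ((hf x).hasFDerivAt.const_smul (lam ^ m)).unique hcomp
  have key : lam ^ m • fderiv ℝ f x (Pi.single i 1) =
      lam ^ σ i • fderiv ℝ f (dilation σ lam x) (Pi.single i 1) := by
    simpa only [smul_apply, ContinuousLinearMap.comp_apply, dilation_single, map_smul] using
      DFunLike.congr_fun chain (Pi.single i 1)
  rw [Real.rpow_sub hlam, div_eq_inv_mul, mul_smul, key,
    inv_smul_smul₀ (Real.rpow_pos_of_pos hlam _).ne']

theorem fderiv_weight_mul [Finite ι] (h : IsDilationHomogeneous σ m f) {x : ι → ℝ}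
    (hf : DifferentiableAt ℝ f x) : fderiv ℝ f x (fun i => σ i * x i) = m • f x := by
  have := Fintype.ofFinite ι
  have hleft : HasDerivAt (fun lam => f (dilation σ lam x))
      (fderiv ℝ f x (fun i => σ i * x i)) 1 :=
    hf.hasFDerivAt.comp_hasDerivAt_of_eq 1 (hasDerivAt_dilation_one σ x) (dilation_one σ x).symm
  have hright : HasDerivAt (fun lam : ℝ => lam ^ m • f x) (m • f x) 1 := by
    simpa using (Real.hasDerivAt_rpow_const (p := m) (Or.inl one_ne_zero)).smul_const (f x)
  refine hleft.unique (hright.congr_of_eventuallyEq ?_)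
  filter_upwards [Ioi_mem_nhds one_pos] with lam hlam using h hlam x

theorem sum_weight_mul_fderiv_single [Fintype ι] [DecidableEq ι] (h : IsDilationHomogeneous σ m f)
    {x : ι → ℝ} (hf : DifferentiableAt ℝ f x) :
    ∑ i, (σ i * x i) • fderiv ℝ f x (Pi.single i 1) = m • f x := by
  rw [← h.fderiv_weight_mul hf, pi_eq_sum_univ' fun i => σ i * x i, map_sum]
  simp only [map_smul]

end Derivative

theorem exists_mvPolynomial {ι : Type*} [Fintype ι] {σ : ι → ℝ} {a : ℝ} (ha : 0 < a)
    (hσ : ∀ i, a ≤ σ i) {k : ℕ} {m : ℝ} (hm : m ≤ k * a) {f : (ι → ℝ) → ℝ} (hf : ContDiff ℝ k f)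
    (h : IsDilationHomogeneous σ m f) :
    ∃ P : MvPolynomial ι ℝ, ∀ x, f x = MvPolynomial.eval x P := by
  classical
  have hσ_pos : ∀ i, 0 < σ i := fun i => ha.trans_le (hσ i)
  induction k generalizing m f with
  | zero =>
    have hm_nonpos : m ≤ 0 := by simpa using hm
    obtain hm_neg | rfl := hm_nonpos.lt_or_eq
    · exact ⟨0, by simpa using h.apply_eq_zero_of_neg hσ_pos hm_neg hf.continuous.continuousAt⟩
    · exact ⟨MvPolynomial.C (f 0), by
        simpa using h.apply_eq_apply_zero hσ_pos hf.continuous.continuousAt⟩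
  | succ k ih =>
    obtain rfl | hm_ne := eq_or_ne m 0
    · exact ⟨MvPolynomial.C (f 0), by
        simpa using h.apply_eq_apply_zero hσ_pos hf.continuous.continuousAt⟩
    have hdiff : Differentiable ℝ f := hf.differentiable (by simp)
    have hpartial : ∀ i, ∃ P : MvPolynomial ι ℝ,
        ∀ x, fderiv ℝ f x (Pi.single i 1) = MvPolynomial.eval x P := fun i =>
      ih (by push_cast at hm; linarith [hσ i])
        ((hf.fderiv_right (by norm_cast)).clm_apply contDiff_const) (h.fderiv_single hdiff i)
    choose P hP using hpartial
    refine ⟨MvPolynomial.C m⁻¹ * ∑ i, MvPolynomial.C (σ i) * MvPolynomial.X i * P i, fun x => ?_⟩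
    have euler := h.sum_weight_mul_fderiv_single (hdiff x)
    simp only [smul_eq_mul, hP] at euler
    simp only [map_mul, map_sum, MvPolynomial.eval_C, MvPolynomial.eval_X, euler]
    rw [inv_mul_cancel_left₀ hm_ne]

end IsDilationHomogeneous

section VectorField

variable {ι : Type*} [Fintype ι] [DecidableEq ι]

/-- The derivative `X u = ∑ p_j ∂_j u` of `u` along the vector field `X` with coefficients `p`. -/
noncomputable def derivAlong (p : ι → (ι → ℝ) → ℝ) (u : (ι → ℝ) → ℝ) (x : ι → ℝ) : ℝ :=
  ∑ j, p j x * fderiv ℝ u x (Pi.single j 1)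

theorem derivAlong_continuousLinearMap (p : ι → (ι → ℝ) → ℝ) (L : (ι → ℝ) →L[ℝ] ℝ) (x : ι → ℝ) :
    derivAlong p L x = L fun j => p j x := by
  rw [pi_eq_sum_univ' fun j => p j x, map_sum]
  simp only [derivAlong, ContinuousLinearMap.fderiv, map_smul, smul_eq_mul]

theorem isDilationHomogeneous_coeff {σ : ι → ℝ} {ν : ℝ} {p : ι → (ι → ℝ) → ℝ}
    (hom : ∀ (u : (ι → ℝ) →L[ℝ] ℝ) (lam : ℝ), 0 < lam → ∀ x,
      derivAlong p (u ∘ dilation σ lam) x = lam ^ ν * derivAlong p u (dilation σ lam x)) (j : ι) :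
    IsDilationHomogeneous σ (σ j - ν) (p j) := by
  intro lam hlam x
  have key : lam ^ σ j * p j x = lam ^ ν * p j (dilation σ lam x) := by
    have hproj := hom (ContinuousLinearMap.proj j) lam hlam x
    rwa [← ContinuousLinearMap.coe_comp, derivAlong_continuousLinearMap,
      derivAlong_continuousLinearMap] at hproj
  rw [smul_eq_mul, Real.rpow_sub hlam, div_mul_eq_mul_div, key,
    mul_div_cancel_left₀ _ (Real.rpow_pos_of_pos hlam ν).ne']

-- Each differentiation lowers the degree by at least `a`, so that `k j` derivatives, with `k j` at
-- least `(σ j - ν) / a`, bring `p j` down to a degree at which continuity suffices.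
theorem stmt_11_general {σ : ι → ℝ} {a : ℝ} (ha : 0 < a) (hσ : ∀ i, a ≤ σ i) {ν : ℝ}
    {p : ι → (ι → ℝ) → ℝ} {k : ι → ℕ} (hp : ∀ j, ContDiff ℝ (k j) (p j))
    (hk : ∀ j, σ j - ν ≤ k j * a)
    (hom : ∀ (u : (ι → ℝ) →L[ℝ] ℝ) (lam : ℝ), 0 < lam → ∀ x,
      derivAlong p (u ∘ dilation σ lam) x = lam ^ ν * derivAlong p u (dilation σ lam x)) (j : ι) :
    IsDilationHomogeneous σ (σ j - ν) (p j) ∧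
      (∃ P : MvPolynomial ι ℝ, ∀ x, p j x = MvPolynomial.eval x P) ∧
      (σ j < ν → ∀ x, p j x = 0) := by
  have h : IsDilationHomogeneous σ (σ j - ν) (p j) := isDilationHomogeneous_coeff hom j
  exact ⟨h, h.exists_mvPolynomial ha hσ (hk j) (hp j), fun hlt =>
    h.apply_eq_zero_of_neg (fun i => ha.trans_le (hσ i)) (sub_neg.2 hlt)
      (hp j).continuous.continuousAt⟩

end VectorField

/-- Let `X = Σ_j p_j ∂_{x_j}` be a smooth vector field on `ℝⁿ` which is
`δ_λ`-homogeneous of positive integer degree `ν`, i.e. `X(u ∘ δ_λ) = λ^ν (Xu) ∘ δ_λ` for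
all smooth `u`. Then each coefficient satisfies `p_j(δ_λ(x)) = λ^(σ_j − ν) p_j(x)`; hence
each `p_j` is a polynomial function, and `p_j ≡ 0` whenever `ν > σ_j`. -/
theorem stmt_11 (n : ℕ) (σ : Fin n → ℕ) (hσ : ∀ i, 0 < σ i)
    (p : Fin n → (Fin n → ℝ) → ℝ) (hp : ∀ j, ContDiff ℝ (⊤ : ℕ∞) (p j))
    (X : ((Fin n → ℝ) → ℝ) → (Fin n → ℝ) → ℝ)
    (hX : ∀ u x, X u x = ∑ j, p j x * fderiv ℝ u x (Pi.single j 1))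
    (ν : ℕ) (hν : 0 < ν)
    (hom : ∀ u : (Fin n → ℝ) → ℝ, ContDiff ℝ (⊤ : ℕ∞) u → ∀ lam : ℝ, 0 < lam → ∀ x : Fin n → ℝ,
      X (fun y => u (fun i => lam ^ (σ i) * y i)) x
        = lam ^ ν * X u (fun i => lam ^ (σ i) * x i)) :
    ∀ j : Fin n,
      (∀ lam : ℝ, 0 < lam → ∀ x : Fin n → ℝ,
        p j (fun i => lam ^ (σ i) * x i) = lam ^ ((σ j : ℤ) - (ν : ℤ)) * p j x) ∧
      (∃ P : MvPolynomial (Fin n) ℝ, ∀ x, p j x = MvPolynomial.eval x P) ∧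
      (σ j < ν → ∀ x, p j x = 0) := by
  obtain rfl : X = derivAlong p := funext₂ hX
  intro j
  obtain ⟨hhom, hpoly, hzero⟩ := stmt_11_general (σ := fun i => (σ i : ℝ)) (ν := ν) (k := σ)
    one_pos (fun i => Nat.one_le_cast.2 (hσ i)) (fun i => (hp i).of_le (mod_cast le_top))
    (by simp) (fun u lam hlam x => by
      simpa only [Function.comp_def, dilation_natCast, Real.rpow_natCast] using
        hom u u.contDiff lam hlam x) j
  refine ⟨fun lam hlam x => ?_, hpoly, fun hlt => hzero (Nat.cast_lt.2 hlt)⟩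
  simpa [dilation_natCast, ← Real.rpow_intCast] using hhom hlam x
end
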